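/- Every simple planar graph of maximum degree at most 3 admits an embedding in the two-dimensional integer grid in which each vertex is mapped to a distinct grid point and each edge is mapped to a path of axis-parallel grid segments, such that the paths corresponding to distinct edges are internally disjoint (they share at most common endpoints). -/

import Mathlib

/-- The set of edges incident to a vertex `v`. -/
def incidentEdges {V E : Type} [Fintype E] [DecidableEq V] [DecidableEq E]
    (ends : E → V × V) (v : V) : Finset E :=
  Finset.univ.filter (fun e => (ends e).1 = v ∨ (ends e).2 = v)

/-- A plane drawing of a graph: vertices are mapped injectively to points of
`ℝ²` and each edge to a simple arc joining the points of its endpoints, such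
that arcs of distinct edges meet at most at common endpoints. -/
def IsPlaneDrawing {V E : Type} (ends : E → V × V) (pos : V → ℝ × ℝ)
    (γ : E → ℝ → ℝ × ℝ) : Prop :=
  Function.Injective pos ∧
  (∀ e, ContinuousOn (γ e) (Set.Icc 0 1)) ∧
  (∀ e, γ e 0 = pos (ends e).1 ∧ γ e 1 = pos (ends e).2) ∧
  (∀ e, Set.InjOn (γ e) (Set.Icc 0 1)) ∧
  (∀ e e', e ≠ e' → ∀ s ∈ Set.Icc (0:ℝ) 1, ∀ t ∈ Set.Icc (0:ℝ) 1,
    γ e s = γ e' t → (s = 0 ∨ s = 1) ∧ (t = 0 ∨ t = 1))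

/-- Two grid points are adjacent if they differ by one unit step in exactly
one coordinate. -/
def gridAdj (a b : ℤ × ℤ) : Prop :=
  (a.1 - b.1).natAbs + (a.2 - b.2).natAbs = 1

/-- The integer grid as a simple graph. -/
def gridG : SimpleGraph (ℤ × ℤ) where
  Adj := gridAdj
  symm := ⟨by intro a b h; unfold gridAdj at *; omega⟩
  loopless := ⟨by intro a h; unfold gridAdj at *; simp at h⟩

/-- `x` and `y` are joined by a walk of `G` staying in `A`. -/
def ConnIn {W : Type} (G : SimpleGraph W) (A : Set W) (x y : W) : Prop :=
  ∃ p : G.Walk x y, ∀ z ∈ p.support, z ∈ A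

theorem ConnIn.refl' {W : Type} {G : SimpleGraph W} {A : Set W} {x : W} (h : x ∈ A) :
    ConnIn G A x x := ⟨SimpleGraph.Walk.nil, by simpa using h⟩

theorem ConnIn.symm' {W : Type} {G : SimpleGraph W} {A : Set W} {x y : W}
    (h : ConnIn G A x y) : ConnIn G A y x := by
  obtain ⟨p, hp⟩ := h
  exact ⟨p.reverse, by simpa using hp⟩

theorem ConnIn.trans' {W : Type} {G : SimpleGraph W} {A : Set W} {x y z : W}
    (h : ConnIn G A x y) (h' : ConnIn G A y z) : ConnIn G A x z := by
  obtain ⟨p, hp⟩ := h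
  obtain ⟨q, hq⟩ := h'
  refine ⟨p.append q, fun w hw => ?_⟩
  rw [SimpleGraph.Walk.mem_support_append_iff] at hw
  exact hw.elim (hp w) (hq w)

theorem ConnIn.mono' {W : Type} {G : SimpleGraph W} {A B : Set W} {x y : W}
    (h : ConnIn G A x y) (hAB : A ⊆ B) : ConnIn G B x y := by
  obtain ⟨p, hp⟩ := h
  exact ⟨p, fun z hz => hAB (hp z hz)⟩

theorem firstHit {W : Type} {G : SimpleGraph W} (B : Set W) {x y : W} (p : G.Walk x y)
    (hy : y ∈ B) : ∃ b ∈ B, ∃ q : G.Walk x b, (∀ z ∈ q.support, z ∈ p.support) ∧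
      ∀ z ∈ q.support, z ∈ B → z = b := by
  induction p with
  | nil => exact ⟨_, hy, SimpleGraph.Walk.nil, by simp, by simp⟩
  | @cons u v w h p ih =>
    by_cases hu : u ∈ B
    · exact ⟨u, hu, SimpleGraph.Walk.nil, by simp, by simp⟩
    · obtain ⟨b, hb, q, h1, h2⟩ := ih hy
      refine ⟨b, hb, SimpleGraph.Walk.cons h q, ?_, ?_⟩
      · intro z hz
        simp only [SimpleGraph.Walk.support_cons, List.mem_cons] at hz ⊢
        exact hz.imp id (h1 z)
      · intro z hz hzB
        simp only [SimpleGraph.Walk.support_cons, List.mem_cons] at hz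
        rcases hz with rfl | hz
        · exact absurd hzB hu
        · exact h2 z hz hzB

theorem core {W : Type} {G : SimpleGraph W} (A B P : Set W) {x y : W}
    (h : ConnIn G P x y) (hx : x ∈ A) (hy : y ∈ B) :
    ∃ a ∈ A, ∃ b ∈ B, ∃ q : G.Walk a b, (∀ z ∈ q.support, z ∈ P) ∧
      (∀ z ∈ q.support, z ∈ A → z = a) ∧ (∀ z ∈ q.support, z ∈ B → z = b) := by
  obtain ⟨p, hp⟩ := h
  obtain ⟨b, hb, q, h1, h2⟩ := firstHit B p hy
  obtain ⟨a, ha, q', h3, h4⟩ := firstHit A q.reverse hx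
  simp only [SimpleGraph.Walk.support_reverse, List.mem_reverse] at h3
  refine ⟨a, ha, b, hb, q'.reverse, ?_, ?_, ?_⟩ <;>
    simp only [SimpleGraph.Walk.support_reverse, List.mem_reverse]
  · exact fun z hz => hp z (h1 z (h3 z hz))
  · exact h4
  · exact fun z hz hB => h2 z (h3 z hz) hB

theorem path_split {W : Type} [DecidableEq W] {G : SimpleGraph W} {x y z w : W} (p : G.Walk x y)
    (hp : p.IsPath) (hz : z ∈ p.support) (h1 : w ∈ (p.takeUntil z hz).support)
    (h2 : w ∈ (p.dropUntil z hz).support) : w = z := by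
  by_contra hne
  rw [← p.take_spec hz] at hp
  have hn := hp.support_nodup
  rw [SimpleGraph.Walk.support_append] at hn
  have hd := List.disjoint_of_nodup_append hn
  refine hd h1 ?_
  rw [SimpleGraph.Walk.mem_support_iff] at h2
  exact h2.resolve_left hne

theorem tripod {W : Type} {G : SimpleGraph W} (A : Set W)
    (hA : ∀ x ∈ A, ∀ y ∈ A, ConnIn G A x y) (a : Fin 3 → W) (ha : ∀ i, a i ∈ A) :
    ∃ c ∈ A, ∃ q : ∀ i, G.Walk c (a i), (∀ i, ∀ z ∈ (q i).support, z ∈ A) ∧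
      ∀ i j, i ≠ j → ∀ z, z ∈ (q i).support → z ∈ (q j).support → z = c := by
  classical
  obtain ⟨p0, hp0⟩ := hA _ (ha 0) _ (ha 1)
  obtain ⟨r, hr⟩ := hA _ (ha 2) _ (ha 0)
  set p := p0.bypass with hpdef
  have hpA : ∀ z ∈ p.support, z ∈ A := fun z hz => hp0 z (p0.support_bypass_subset_support hz)
  have hpath : p.IsPath := p0.bypass_isPath
  obtain ⟨c, hc, s, hs, hs'⟩ := firstHit {z | z ∈ p.support} r (by simp)
  have hc' : c ∈ p.support := hc
  have t0 : ∀ z, z ∈ (p.takeUntil c hc').support → z ∈ p.support :=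
    fun z hz => p.support_takeUntil_subset_support hc' hz
  have t1 : ∀ z, z ∈ (p.dropUntil c hc').support → z ∈ p.support :=
    fun z hz => p.support_dropUntil_subset_support hc' hz
  have tt : ∀ z, z ∈ (p.takeUntil c hc').support → z ∈ (p.dropUntil c hc').support → z = c :=
    fun z h1 h2 => path_split p hpath hc' h1 h2
  have key : ∀ (q0 : G.Walk c (a 0)) (q1 : G.Walk c (a 1)) (q2 : G.Walk c (a 2)),
      ∃ q : ∀ i, G.Walk c (a i), q 0 = q0 ∧ q 1 = q1 ∧ q 2 = q2 := by
    intro q0 q1 q2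
    exact ⟨Fin.cons q0 (Fin.cons q1 (Fin.cons q2 finZeroElim)), rfl, rfl, rfl⟩
  obtain ⟨q, e0, e1, e2⟩ := key (p.takeUntil c hc').reverse (p.dropUntil c hc') s.reverse
  have m0 : ∀ z, z ∈ (q 0).support ↔ z ∈ (p.takeUntil c hc').support := by simp [e0]
  have m1 : ∀ z, z ∈ (q 1).support ↔ z ∈ (p.dropUntil c hc').support := by simp [e1]
  have m2 : ∀ z, z ∈ (q 2).support ↔ z ∈ s.support := by simp [e2]
  have d01 : ∀ z, z ∈ (q 0).support → z ∈ (q 1).support → z = c := by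
    intro z; rw [m0, m1]; exact tt z
  have d02 : ∀ z, z ∈ (q 0).support → z ∈ (q 2).support → z = c := by
    intro z; rw [m0, m2]; exact fun h h' => hs' z h' (t0 z h)
  have d12 : ∀ z, z ∈ (q 1).support → z ∈ (q 2).support → z = c := by
    intro z; rw [m1, m2]; exact fun h h' => hs' z h' (t1 z h)
  refine ⟨c, hpA c hc, q, ?_, ?_⟩
  · intro i
    fin_cases i
    · intro z hz; exact hpA z (t0 z ((m0 z).1 hz))
    · intro z hz; exact hpA z (t1 z ((m1 z).1 hz))
    · intro z hz; exact hr z (hs z ((m2 z).1 hz))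
  · intro i j hij z
    fin_cases i <;> fin_cases j
    · exact absurd rfl hij
    · exact d01 z
    · exact d02 z
    · exact fun h h' => d01 z h' h
    · exact absurd rfl hij
    · exact d12 z
    · exact fun h h' => d02 z h' h
    · exact fun h h' => d12 z h' h
    · exact absurd rfl hij

theorem tripodS {W E : Type} {G : SimpleGraph W} (A : Set W) (hne : A.Nonempty)
    (hA : ∀ x ∈ A, ∀ y ∈ A, ConnIn G A x y) (s : Finset E) (hs : s.card ≤ 3) (a : E → W)
    (ha : ∀ e ∈ s, a e ∈ A) :
    ∃ c ∈ A, ∃ L : E → Set W, (∀ e ∈ s, L e ⊆ A ∧ a e ∈ L e ∧ ConnIn G (L e) c (a e)) ∧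
      ∀ e ∈ s, ∀ e' ∈ s, e ≠ e' → ∀ z, z ∈ L e → z ∈ L e' → z = c := by
  classical
  obtain ⟨d, hd⟩ := hne
  have hf : ∃ f : E → Fin 3, Set.InjOn f s := by
    refine ⟨fun e => if h : e ∈ s then Fin.castLE hs (s.equivFin ⟨e, h⟩) else 0, ?_⟩
    intro e he e' he' hee
    have he1 : e ∈ s := he
    have he2 : e' ∈ s := he'
    simpa [he1, he2] using hee
  obtain ⟨f, hf⟩ := hf
  let a' : Fin 3 → W := fun i => if h : ∃ e ∈ s, f e = i then a h.choose else d
  have ha' : ∀ e ∈ s, a' (f e) = a e := by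
    intro e he
    have h : ∃ e' ∈ s, f e' = f e := ⟨e, he, rfl⟩
    have : h.choose = e := hf h.choose_spec.1 he h.choose_spec.2
    simp only [a']
    rw [dif_pos h, this]
  have ha'A : ∀ i, a' i ∈ A := by
    intro i
    by_cases h : ∃ e ∈ s, f e = i
    · obtain ⟨e, he, rfl⟩ := h
      rw [ha' e he]; exact ha e he
    · simp only [a']; rw [dif_neg h]; exact hd
  obtain ⟨c, hc, q, h1, h2⟩ := tripod A hA a' ha'A
  refine ⟨c, hc, fun e => {z | z ∈ (q (f e)).support}, ?_, ?_⟩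
  · intro e he
    refine ⟨fun z hz => h1 _ z hz, ?_, ?_⟩
    · rw [← ha' e he]; simp
    · rw [← ha' e he]; exact ⟨q (f e), fun z hz => hz⟩
  · intro e he e' he' hne z hz hz'
    exact h2 _ _ (fun h => hne (hf he he' h)) z hz hz'

theorem conn_horiz (A : Set (ℤ × ℤ)) (b i j : ℤ) (hij : i ≤ j)
    (h : ∀ k, i ≤ k → k ≤ j → (k, b) ∈ A) : ConnIn gridG A (i, b) (j, b) := by
  induction j, hij using Int.le_induction with
  | base => exact ConnIn.refl' (h i le_rfl le_rfl)
  | succ j hij ih =>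
    refine (ih fun k h1 h2 => h k h1 (by omega)).trans' ?_
    have hadj : gridG.Adj (j, b) (j + 1, b) := by simp [gridG, gridAdj]
    refine ⟨hadj.toWalk, ?_⟩
    intro z hz
    simp at hz
    rcases hz with rfl | rfl
    · exact h _ hij (by omega)
    · exact h _ (by omega) le_rfl

theorem conn_vert (A : Set (ℤ × ℤ)) (b i j : ℤ) (hij : i ≤ j)
    (h : ∀ k, i ≤ k → k ≤ j → (b, k) ∈ A) : ConnIn gridG A (b, i) (b, j) := by
  induction j, hij using Int.le_induction with
  | base => exact ConnIn.refl' (h i le_rfl le_rfl)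
  | succ j hij ih =>
    refine (ih fun k h1 h2 => h k h1 (by omega)).trans' ?_
    have hadj : gridG.Adj (b, j) (b, j + 1) := by simp [gridG, gridAdj]
    refine ⟨hadj.toWalk, ?_⟩
    intro z hz
    simp at hz
    rcases hz with rfl | rfl
    · exact h _ hij (by omega)
    · exact h _ (by omega) le_rfl

/-- The real point of a grid point at mesh `h`. -/
def rpt (h : ℝ) (z : ℤ × ℤ) : ℝ × ℝ := (h * z.1, h * z.2)

/-- Grid points in a box. -/
def gbox (h : ℝ) (p : ℝ × ℝ) (r : ℝ) : Set (ℤ × ℤ) := {z | dist (rpt h z) p ≤ r}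

theorem mem_gbox {h : ℝ} {p : ℝ × ℝ} {r : ℝ} {z : ℤ × ℤ} :
    z ∈ gbox h p r ↔ |h * z.1 - p.1| ≤ r ∧ |h * z.2 - p.2| ≤ r := by
  simp [gbox, rpt, Prod.dist_eq, Real.dist_eq]

theorem between_le {h p r : ℝ} (hh : 0 < h) {i j k : ℤ} (hi : |h * i - p| ≤ r)
    (hj : |h * j - p| ≤ r) (h1 : i ≤ k) (h2 : k ≤ j) : |h * k - p| ≤ r := by
  rw [abs_le] at *
  have h1' : h * i ≤ h * k := by gcongr
  have h2' : h * k ≤ h * j := by gcongr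
  constructor <;> linarith

theorem gbox_conn {h : ℝ} (hh : 0 < h) (p : ℝ × ℝ) (r : ℝ) :
    ∀ x ∈ gbox h p r, ∀ y ∈ gbox h p r, ConnIn gridG (gbox h p r) x y := by
  rintro ⟨x1, x2⟩ hx ⟨y1, y2⟩ hy
  rw [mem_gbox] at hx hy
  have H1 : ConnIn gridG (gbox h p r) (x1, x2) (y1, x2) := by
    rcases le_total x1 y1 with hle | hle
    · exact conn_horiz _ _ _ _ hle fun k h1 h2 =>
        mem_gbox.2 ⟨between_le hh hx.1 hy.1 h1 h2, hx.2⟩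
    · exact (conn_horiz _ _ _ _ hle fun k h1 h2 =>
        mem_gbox.2 ⟨between_le hh hy.1 hx.1 h1 h2, hx.2⟩).symm'
  have H2 : ConnIn gridG (gbox h p r) (y1, x2) (y1, y2) := by
    rcases le_total x2 y2 with hle | hle
    · exact conn_vert _ _ _ _ hle fun k h1 h2 =>
        mem_gbox.2 ⟨hy.1, between_le hh hx.2 hy.2 h1 h2⟩
    · exact (conn_vert _ _ _ _ hle fun k h1 h2 =>
        mem_gbox.2 ⟨hy.1, between_le hh hy.2 hx.2 h1 h2⟩).symm'
  exact H1.trans' H2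

/-- Rounding down to the grid. -/
noncomputable def gfl (h : ℝ) (x : ℝ × ℝ) : ℤ × ℤ := (⌊x.1 / h⌋, ⌊x.2 / h⌋)

theorem fl_le {h : ℝ} (hh : 0 < h) (x : ℝ) : |h * (⌊x / h⌋ : ℤ) - x| ≤ h := by
  have h1 := Int.floor_le (x / h)
  have h2 := Int.lt_floor_add_one (x / h)
  have e : h * (x / h) = x := by field_simp
  have h1' := mul_le_mul_of_nonneg_left h1 hh.le
  have h2' := mul_le_mul_of_nonneg_left h2.le hh.le
  rw [abs_le]
  constructor <;> linarith

theorem gfl_mem {h : ℝ} (hh : 0 < h) (x : ℝ × ℝ) : dist (rpt h (gfl h x)) x ≤ h := by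
  have : gfl h x ∈ gbox h x h := mem_gbox.2 ⟨fl_le hh _, fl_le hh _⟩
  exact this

theorem arc_conn {h : ℝ} (hh : 0 < h) (γ : ℝ → ℝ × ℝ) (a b : ℝ) (hab : a ≤ b)
    (hγ : ContinuousOn γ (Set.Icc a b)) :
    ConnIn gridG {z | ∃ t ∈ Set.Icc a b, dist (rpt h z) (γ t) ≤ 2 * h}
      (gfl h (γ a)) (gfl h (γ b)) := by
  refine (isPreconnected_Icc (a := a) (b := b)).induction₂
    (fun s t => ConnIn gridG {z | ∃ t ∈ Set.Icc a b, dist (rpt h z) (γ t) ≤ 2 * h}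
      (gfl h (γ s)) (gfl h (γ t))) ?_ ?_ ?_ (Set.left_mem_Icc.2 hab) (Set.right_mem_Icc.2 hab)
  · intro t ht
    have := (hγ t ht).eventually (Metric.ball_mem_nhds (γ t) hh)
    filter_upwards [this] with s hs
    have hs : dist (γ s) (γ t) < h := hs
    refine (gbox_conn hh (γ t) (2 * h) _ ?_ _ ?_).mono' fun z hz => ⟨t, ht, hz⟩
    · have := gfl_mem hh (γ t)
      change dist _ _ ≤ _
      linarith
    · have := gfl_mem hh (γ s)
      change dist _ _ ≤ _
      have := dist_triangle (rpt h (gfl h (γ s))) (γ s) (γ t)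
      linarith
  · intro x y z _ _ _ h1 h2
    exact h1.trans' h2
  · intro x y _ _ h1
    exact h1.symm'

theorem compact_sep {K L : Set (ℝ × ℝ)} (hK : IsCompact K) (hL : IsCompact L)
    (hd : ∀ x ∈ K, ∀ y ∈ L, x ≠ y) : ∃ δ > 0, ∀ x ∈ K, ∀ y ∈ L, δ < dist x y := by
  rcases (K ×ˢ L).eq_empty_or_nonempty with h | h
  · exact ⟨1, one_pos, fun x hx y hy => absurd (show (x, y) ∈ K ×ˢ L from ⟨hx, hy⟩) (by simp [h])⟩
  · obtain ⟨⟨x0, y0⟩, h0, hmin⟩ := (hK.prod hL).exists_isMinOn h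
      (f := fun q : (ℝ × ℝ) × (ℝ × ℝ) => dist q.1 q.2) (by fun_prop)
    have hpos : 0 < dist x0 y0 := dist_pos.2 (hd _ h0.1 _ h0.2)
    refine ⟨dist x0 y0 / 2, by linarith, fun x hx y hy => ?_⟩
    have : dist x0 y0 ≤ dist x y := hmin (show (x, y) ∈ K ×ˢ L from ⟨hx, hy⟩)
    linarith

theorem ev_lt {δ : ℝ} (hδ : 0 < δ) : ∀ᶠ r in nhdsWithin (0 : ℝ) (Set.Ioi 0), r < δ :=
  nhdsWithin_le_nhds (gt_mem_nhds hδ)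

theorem geometry {V E : Type} [Fintype V] [Fintype E] (ends : E → V × V)
    (pos : V → ℝ × ℝ) (γ : E → ℝ → ℝ × ℝ) (hD : IsPlaneDrawing ends pos γ) :
    ∃ (A : V → Set (ℤ × ℤ)) (P : E → Set (ℤ × ℤ)),
      (∀ v, (A v).Nonempty) ∧
      (∀ v, ∀ x ∈ A v, ∀ y ∈ A v, ConnIn gridG (A v) x y) ∧
      (∀ v w, v ≠ w → ∀ z, z ∈ A v → z ∉ A w) ∧
      (∀ e e', e ≠ e' → ∀ z, z ∈ P e → z ∉ P e') ∧
      (∀ u e', (∃ e, (ends e).1 = u ∨ (ends e).2 = u) → (ends e').1 ≠ u → (ends e').2 ≠ u →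
        ∀ z, z ∈ A u → z ∉ P e') ∧
      (∀ e, ∃ x ∈ A (ends e).1, ∃ y ∈ A (ends e).2, ConnIn gridG (P e) x y) := by
  obtain ⟨hinj, hcont, hends, hsimp, hcross⟩ := hD
  have ev1 : ∀ᶠ r in nhdsWithin (0 : ℝ) (Set.Ioi 0), ∀ v w, v ≠ w →
      2 * r < dist (pos v) (pos w) := by
    refine Filter.eventually_all.2 fun v => Filter.eventually_all.2 fun w => ?_
    by_cases hvw : v = w
    · simp [hvw]
    · have hpos : 0 < dist (pos v) (pos w) := dist_pos.2 fun h => hvw (hinj h)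
      filter_upwards [ev_lt (half_pos hpos)] with r hr _
      linarith
  have ev2 : ∀ᶠ r in nhdsWithin (0 : ℝ) (Set.Ioi 0), ∀ u e',
      (∃ e, (ends e).1 = u ∨ (ends e).2 = u) → (ends e').1 ≠ u → (ends e').2 ≠ u →
      ∀ t ∈ Set.Icc (0 : ℝ) 1, 2 * r < dist (pos u) (γ e' t) := by
    refine Filter.eventually_all.2 fun u => Filter.eventually_all.2 fun e' => ?_
    by_cases hc : (∃ e, (ends e).1 = u ∨ (ends e).2 = u) ∧ (ends e').1 ≠ u ∧ (ends e').2 ≠ u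
    · obtain ⟨⟨e, he⟩, hn1, hn2⟩ := hc
      have hsep : ∀ x ∈ ({pos u} : Set (ℝ × ℝ)), ∀ y ∈ γ e' '' Set.Icc 0 1, x ≠ y := by
        rintro x rfl y ⟨t, ht, rfl⟩ heq
        have hne : e ≠ e' := by
          rintro rfl
          exact he.elim hn1 hn2
        have hs : ∃ s ∈ Set.Icc (0 : ℝ) 1, γ e s = pos u := by
          rcases he with he | he
          · exact ⟨0, by simp, by rw [(hends e).1, he]⟩
          · exact ⟨1, by simp, by rw [(hends e).2, he]⟩
        obtain ⟨s, hs, hsu⟩ := hs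
        have := (hcross e e' hne s hs t ht (hsu.trans heq)).2
        rcases this with rfl | rfl
        · rw [(hends e').1] at heq
          exact hn1 (hinj heq).symm
        · rw [(hends e').2] at heq
          exact hn2 (hinj heq).symm
      obtain ⟨δ, hδ, hsepδ⟩ := compact_sep isCompact_singleton
        (isCompact_Icc.image_of_continuousOn (hcont e')) hsep
      filter_upwards [ev_lt (half_pos hδ)] with r hr _ _ _ t ht
      have := hsepδ _ rfl _ ⟨t, ht, rfl⟩
      linarith
    · exact Filter.Eventually.of_forall fun r h1 h2 h3 => absurd ⟨h1, h2, h3⟩ hc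
  obtain ⟨r, ⟨hr1, hr2⟩, hr⟩ := ((ev1.and ev2).and self_mem_nhdsWithin).exists
  have hr : 0 < r := hr
  have ev3 : ∀ᶠ ε in nhdsWithin (0 : ℝ) (Set.Ioi 0), ∀ e,
      dist (γ e ε) (pos (ends e).1) < r / 2 ∧ dist (γ e (1 - ε)) (pos (ends e).2) < r / 2 := by
    refine Filter.eventually_all.2 fun e => ?_
    have hI : ∀ᶠ ε in nhdsWithin (0 : ℝ) (Set.Ioi 0), ε ∈ Set.Icc (0 : ℝ) 1 := by
      filter_upwards [ev_lt one_pos, self_mem_nhdsWithin] with ε h1 h2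
      exact ⟨le_of_lt h2, h1.le⟩
    have c0 : Filter.Tendsto (γ e) (nhdsWithin 0 (Set.Ioi 0)) (nhds (pos (ends e).1)) := by
      have := hcont e 0 (by simp)
      rw [ContinuousWithinAt, (hends e).1] at this
      refine this.comp (tendsto_nhdsWithin_iff.2 ⟨Filter.tendsto_id.mono_left nhdsWithin_le_nhds, hI⟩)
    have c1 : Filter.Tendsto (fun ε => γ e (1 - ε)) (nhdsWithin 0 (Set.Ioi 0))
        (nhds (pos (ends e).2)) := by
      have := hcont e 1 (by simp)
      rw [ContinuousWithinAt, (hends e).2] at this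
      refine this.comp (tendsto_nhdsWithin_iff.2 ⟨?_, ?_⟩)
      · have hc : Continuous fun ε : ℝ => 1 - ε := by fun_prop
        have := hc.tendsto 0
        simp only [sub_zero] at this
        exact this.mono_left nhdsWithin_le_nhds
      · filter_upwards [hI] with ε hε
        exact ⟨by linarith [hε.2], by linarith [hε.1]⟩
    exact (c0.eventually (Metric.ball_mem_nhds _ (half_pos hr))).and
      (c1.eventually (Metric.ball_mem_nhds _ (half_pos hr)))
  obtain ⟨ε, ⟨hε1, hε2⟩, hε⟩ :=
    ((ev3.and (ev_lt (show (0 : ℝ) < 1 / 2 by norm_num))).and self_mem_nhdsWithin).exists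
  have hε : 0 < ε := hε
  have hsub : Set.Icc ε (1 - ε) ⊆ Set.Icc (0 : ℝ) 1 := Set.Icc_subset_Icc hε.le (by linarith)
  have ev4 : ∀ᶠ h in nhdsWithin (0 : ℝ) (Set.Ioi 0), ∀ e e', e ≠ e' →
      ∀ s ∈ Set.Icc ε (1 - ε), ∀ t ∈ Set.Icc ε (1 - ε), 4 * h < dist (γ e s) (γ e' t) := by
    refine Filter.eventually_all.2 fun e => Filter.eventually_all.2 fun e' => ?_
    by_cases hee : e = e'
    · simp [hee]
    · obtain ⟨δ, hδ, hsepδ⟩ := compact_sep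
        (isCompact_Icc.image_of_continuousOn ((hcont e).mono hsub))
        (isCompact_Icc.image_of_continuousOn ((hcont e').mono hsub)) (by
          rintro x ⟨s, hs, rfl⟩ y ⟨t, ht, rfl⟩ heq
          rcases (hcross e e' hee s (hsub hs) t (hsub ht) heq).1 with rfl | rfl
          · linarith [hs.1]
          · linarith [hs.2])
      filter_upwards [ev_lt (show 0 < δ / 4 by linarith)] with h hh _ s hs t ht
      have := hsepδ _ ⟨s, hs, rfl⟩ _ ⟨t, ht, rfl⟩
      linarith
  obtain ⟨h, ⟨hh1, hh2⟩, hh⟩ :=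
    ((ev4.and (ev_lt (show (0 : ℝ) < r / 4 by linarith))).and self_mem_nhdsWithin).exists
  have hh : 0 < h := hh
  refine ⟨fun v => gbox h (pos v) r,
    fun e => {z | ∃ t ∈ Set.Icc ε (1 - ε), dist (rpt h z) (γ e t) ≤ 2 * h}, ?_, ?_, ?_, ?_, ?_, ?_⟩
  · intro v
    refine ⟨gfl h (pos v), ?_⟩
    have := gfl_mem hh (pos v)
    change dist _ _ ≤ _
    linarith
  · exact fun v => gbox_conn hh _ _
  · intro v w hvw z hz hz'
    have hz : dist (rpt h z) (pos v) ≤ r := hz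
    have hz' : dist (rpt h z) (pos w) ≤ r := hz'
    have := dist_triangle_left (pos v) (pos w) (rpt h z)
    linarith [hr1 v w hvw]
  · rintro e e' hee z ⟨s, hs, hs'⟩ ⟨t, ht, ht'⟩
    have := dist_triangle_left (γ e s) (γ e' t) (rpt h z)
    linarith [hh1 e e' hee s hs t ht]
  · rintro u e' he hn1 hn2 z hz ⟨t, ht, ht'⟩
    have hz : dist (rpt h z) (pos u) ≤ r := hz
    have := dist_triangle_left (pos u) (γ e' t) (rpt h z)
    linarith [hr2 u e' he hn1 hn2 t (hsub ht)]
  · intro e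
    refine ⟨gfl h (γ e ε), ?_, gfl h (γ e (1 - ε)), ?_,
      arc_conn hh (γ e) ε (1 - ε) (by linarith) ((hcont e).mono hsub)⟩
    · have := gfl_mem hh (γ e ε)
      have := dist_triangle (rpt h (gfl h (γ e ε))) (γ e ε) (pos (ends e).1)
      change dist _ _ ≤ _
      linarith [(hε1 e).1]
    · have := gfl_mem hh (γ e (1 - ε))
      have := dist_triangle (rpt h (gfl h (γ e (1 - ε)))) (γ e (1 - ε)) (pos (ends e).2)
      change dist _ _ ≤ _
      linarith [(hε1 e).2]

/-- Every simple planar graph of maximum degree at most `3` admits a grid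
embedding: vertices go injectively to points of `ℤ²`, each edge becomes a
simple rectilinear grid path between the points of its endpoints, and paths
of distinct edges are internally disjoint (meeting at most at grid points of
common endpoint vertices). -/
theorem planar_maxdeg_three_grid_embedding {V E : Type} [Fintype V]
    [Fintype E] [DecidableEq V] [DecidableEq E] (ends : E → V × V)
    (hsimple_loop : ∀ e : E, (ends e).1 ≠ (ends e).2)
    (hsimple_par : ∀ e e' : E, e ≠ e' →
      ({(ends e).1, (ends e).2} : Set V) ≠ {(ends e').1, (ends e').2})
    (hdeg : ∀ v : V, (incidentEdges ends v).card ≤ 3)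
    (hplanar : ∃ (pos : V → ℝ × ℝ) (γ : E → ℝ → ℝ × ℝ),
      IsPlaneDrawing ends pos γ) :
    ∃ (pos : V → ℤ × ℤ) (path : E → List (ℤ × ℤ)),
      Function.Injective pos ∧
      (∀ e, (path e).head? = some (pos (ends e).1) ∧
        (path e).getLast? = some (pos (ends e).2) ∧
        (path e).Nodup ∧ List.Chain' gridAdj (path e)) ∧
      (∀ e e', e ≠ e' → ∀ z : ℤ × ℤ, z ∈ path e → z ∈ path e' →
        (z = pos (ends e).1 ∨ z = pos (ends e).2) ∧
        (z = pos (ends e').1 ∨ z = pos (ends e').2)) := by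
  classical
  obtain ⟨pos, γ, hD⟩ := hplanar
  obtain ⟨A, P, hne, hconn, hAA, hPP, hAP, hPc⟩ := geometry ends pos γ hD
  choose x hx y hy hxy using hPc
  have hcore := fun e => core (A (ends e).1) (A (ends e).2) (P e) (hxy e) (hx e) (hy e)
  choose a ha b hb q hqP hqa hqb using hcore
  -- the attachment point of `e` at `v`
  let att : V → E → ℤ × ℤ := fun v e => if (ends e).1 = v then a e else b e
  have att1 : ∀ e, att (ends e).1 e = a e := fun e => by simp [att]
  have att2 : ∀ e, att (ends e).2 e = b e := fun e => by simp [att, hsimple_loop e]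
  have hatt : ∀ v, ∀ e ∈ incidentEdges ends v, att v e ∈ A v := by
    intro v e he
    simp only [incidentEdges, Finset.mem_filter, Finset.mem_univ, true_and] at he
    rcases he with rfl | rfl
    · rw [att1]; exact ha e
    · rw [att2]; exact hb e
  have hcoreA : ∀ v, ∀ e ∈ incidentEdges ends v, ∀ z ∈ (q e).support, z ∈ A v →
      z = att v e := by
    intro v e he z hz hzA
    simp only [incidentEdges, Finset.mem_filter, Finset.mem_univ, true_and] at he
    rcases he with rfl | rfl
    · rw [att1]; exact hqa e z hz hzA
    · rw [att2]; exact hqb e z hz hzA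
  choose c hcA L hL hLL using fun v =>
    tripodS (A v) (hne v) (hconn v) (incidentEdges ends v) (hdeg v) (att v) (hatt v)
  have i1 : ∀ e, e ∈ incidentEdges ends (ends e).1 := fun e => by simp [incidentEdges]
  have i2 : ∀ e, e ∈ incidentEdges ends (ends e).2 := fun e => by simp [incidentEdges]
  have hpath : ∀ e, ∃ p : gridG.Walk (c (ends e).1) (c (ends e).2), p.IsPath ∧
      ∀ z ∈ p.support, z ∈ L (ends e).1 e ∨ z ∈ (q e).support ∨ z ∈ L (ends e).2 e := by
    intro e
    have h1 := (hL _ e (i1 e)).2.2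
    have h2 := (hL _ e (i2 e)).2.2
    rw [att1] at h1
    rw [att2] at h2
    obtain ⟨p1, hp1⟩ := h1
    obtain ⟨p2, hp2⟩ := h2
    refine ⟨((p1.append (q e)).append p2.reverse).bypass, SimpleGraph.Walk.bypass_isPath _, ?_⟩
    intro z hz
    have hz := SimpleGraph.Walk.support_bypass_subset_support _ hz
    simp only [SimpleGraph.Walk.mem_support_append_iff, SimpleGraph.Walk.support_reverse,
      List.mem_reverse] at hz
    rcases hz with (hz | hz) | hz
    · exact Or.inl (hp1 z hz)
    · exact Or.inr (Or.inl hz)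
    · exact Or.inr (Or.inr (hp2 z hz))
  choose p hp hps using hpath
  -- every point of a path is on a leg or on the core
  have hleg : ∀ e, ∀ z ∈ (p e).support,
      (∃ v, e ∈ incidentEdges ends v ∧ z ∈ L v e) ∨ z ∈ (q e).support := by
    intro e z hz
    rcases hps e z hz with h | h | h
    · exact Or.inl ⟨_, i1 e, h⟩
    · exact Or.inr h
    · exact Or.inl ⟨_, i2 e, h⟩
  have hLcore : ∀ e e' v z, e ∈ incidentEdges ends v → z ∈ L v e → z ∈ (q e').support →
      e' ∈ incidentEdges ends v ∧ z ∈ L v e' := by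
    intro e e' v z he hz hz'
    have hzA := (hL v e he).1 hz
    have he' : e' ∈ incidentEdges ends v := by
      by_contra hn
      simp only [incidentEdges, Finset.mem_filter, Finset.mem_univ, true_and, not_or] at hn he
      exact hAP v e' ⟨e, he⟩ hn.1 hn.2 z hzA (hqP e' z hz')
    refine ⟨he', ?_⟩
    rw [hcoreA v e' he' z hz' hzA]
    exact (hL v e' he').2.1
  have hmeet : ∀ e e', e ≠ e' → ∀ z, z ∈ (p e).support → z ∈ (p e').support →
      ∃ v, e ∈ incidentEdges ends v ∧ e' ∈ incidentEdges ends v ∧ z = c v := by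
    intro e e' hee z hz hz'
    have fin : ∀ v, e ∈ incidentEdges ends v → z ∈ L v e → e' ∈ incidentEdges ends v →
        z ∈ L v e' → ∃ v, e ∈ incidentEdges ends v ∧ e' ∈ incidentEdges ends v ∧ z = c v :=
      fun v h1 h2 h3 h4 => ⟨v, h1, h3, hLL v e h1 e' h3 hee z h2 h4⟩
    rcases hleg e z hz with ⟨v, hv, hzv⟩ | hq <;> rcases hleg e' z hz' with ⟨w, hw, hzw⟩ | hq'
    · by_cases hvw : v = w
      · subst hvw
        exact fin v hv hzv hw hzw
      · exact absurd ((hL w e' hw).1 hzw) (hAA v w hvw z ((hL v e hv).1 hzv))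
    · obtain ⟨h1, h2⟩ := hLcore e e' v z hv hzv hq'
      exact fin v hv hzv h1 h2
    · obtain ⟨h1, h2⟩ := hLcore e' e w z hw hzw hq
      exact fin w h1 h2 hw hzw
    · exact absurd (hqP e' z hq') (hPP e e' hee z (hqP e z hq))
  refine ⟨c, fun e => (p e).support, ?_, ?_, ?_⟩
  · intro v w hvw
    by_contra hne'
    exact hAA v w hne' (c v) (hcA v) (hvw ▸ hcA w)
  · intro e
    refine ⟨?_, ?_, (hp e).support_nodup, ?_⟩
    · rw [List.head?_eq_some_head (SimpleGraph.Walk.support_ne_nil _)]; simp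
    · rw [List.getLast?_eq_some_getLast (SimpleGraph.Walk.support_ne_nil _)]; simp
    · exact (p e).isChain_adj_support
  · intro e e' hee z hz hz'
    obtain ⟨v, h1, h2, rfl⟩ := hmeet e e' hee z hz hz'
    simp only [incidentEdges, Finset.mem_filter, Finset.mem_univ, true_and] at h1 h2
    exact ⟨h1.imp (fun h => by rw [h]) (fun h => by rw [h]),
      h2.imp (fun h => by rw [h]) (fun h => by rw [h])⟩
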